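/- For two d×d separable states ρ and any orthonormal Hermitian bases (LOO) 𝐆_A, 𝐆_B on each factor, the total QFI satisfies Σ_μ F(ρ, (G_A)_μ ⊗ 𝟙 + 𝟙 ⊗ (G_B)_μ) ≤ 2(d−1). -/

import Mathlib

open Matrix BigOperators Kronecker

/-- Quantum Fisher information of an observable `A` with respect to a state
given by spectral data: eigenvalues `lam` and orthonormal eigenvectors `v`. -/
noncomputable def qfi {n : Type*} [Fintype n] (lam : n → ℝ) (v : n → n → ℂ)
    (A : Matrix n n ℂ) : ℝ :=
  ∑ k, ∑ l, (lam k - lam l) ^ 2 / (2 * (lam k + lam l)) *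
    ‖star (v k) ⬝ᵥ (A *ᵥ v l)‖ ^ 2

/-- squared Euclidean norm -/
noncomputable def nsq {n : Type*} [Fintype n] (x : n → ℂ) : ℝ := ∑ i, ‖x i‖ ^ 2

lemma nsq_eq {n : Type*} [Fintype n] (x : n → ℂ) : (nsq x : ℂ) = star x ⬝ᵥ x := by
  simp only [nsq, dotProduct, Pi.star_apply, Complex.ofReal_sum]
  refine Finset.sum_congr rfl fun i _ => ?_
  rw [← Complex.normSq_eq_norm_sq, Complex.normSq_eq_conj_mul_self]
  rfl

/-- squared Frobenius norm -/
noncomputable def fro {m n : Type*} [Fintype m] [Fintype n] (M : Matrix m n ℂ) : ℝ :=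
  ∑ i, ∑ j, ‖M i j‖ ^ 2

lemma fro_nonneg {m n : Type*} [Fintype m] [Fintype n] (M : Matrix m n ℂ) : 0 ≤ fro M := by
  unfold fro; positivity

lemma fro_eq {m n : Type*} [Fintype m] [Fintype n] (M : Matrix m n ℂ) :
    (fro M : ℂ) = (M * Mᴴ).trace := by
  simp only [fro, trace, diag, mul_apply, conjTranspose_apply, Complex.ofReal_sum]
  refine Finset.sum_congr rfl fun i _ => Finset.sum_congr rfl fun j _ => ?_
  rw [← Complex.normSq_eq_norm_sq, ← Complex.mul_conj]
  rfl

lemma fro_coisometry {m n : Type*} [Fintype m] [Fintype n] [DecidableEq m]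
    (C P : Matrix m n ℂ) (hP : P * Pᴴ = 1) : fro (C * Pᴴ) ≤ fro C := by
  have h : fro (C - C * Pᴴ * P) = fro C - fro (C * Pᴴ) := by
    have : (fro (C - C * Pᴴ * P) : ℂ) = ((fro C - fro (C * Pᴴ) : ℝ) : ℂ) := by
      push_cast
      rw [fro_eq, fro_eq, fro_eq, ← trace_sub]
      congr 1
      have h1 : C * Pᴴ * P * (C * Pᴴ * P)ᴴ = C * Pᴴ * (C * Pᴴ)ᴴ := by
        simp only [conjTranspose_mul, conjTranspose_conjTranspose]
        calc _ = C * Pᴴ * (P * Pᴴ) * (P * Cᴴ) := by simp only [Matrix.mul_assoc]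
          _ = _ := by rw [hP, Matrix.mul_one]
      have h2 : C * (C * Pᴴ * P)ᴴ = C * Pᴴ * (C * Pᴴ)ᴴ := by
        simp only [conjTranspose_mul, conjTranspose_conjTranspose, Matrix.mul_assoc]
      have h3 : C * Pᴴ * P * Cᴴ = C * Pᴴ * (C * Pᴴ)ᴴ := by
        simp only [conjTranspose_mul, conjTranspose_conjTranspose, Matrix.mul_assoc]
      rw [conjTranspose_sub, Matrix.sub_mul, Matrix.mul_sub, Matrix.mul_sub, h1, h2, h3]
      abel
    exact_mod_cast this
  have := fro_nonneg (C - C * Pᴴ * P)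
  linarith

lemma fro_unitary {m n : Type*} [Fintype m] [Fintype n] [DecidableEq m]
    (V : Matrix m m ℂ) (hV : V * Vᴴ = 1) (C : Matrix m n ℂ) : fro (Vᴴ * C) = fro C := by
  have : (fro (Vᴴ * C) : ℂ) = fro C := by
    rw [fro_eq, fro_eq, conjTranspose_mul, conjTranspose_conjTranspose]
    calc _ = (Vᴴ * (C * Cᴴ * V)).trace := by simp only [Matrix.mul_assoc]
      _ = (C * Cᴴ * V * Vᴴ).trace := trace_mul_comm _ _
      _ = _ := by rw [Matrix.mul_assoc, hV, Matrix.mul_one]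
  exact_mod_cast this

lemma two_term (a b : ℝ) (ha : 0 ≤ a) (hb : 0 ≤ b) (y z : ℂ) :
    ‖y * (√a : ℂ) - z * (√b : ℂ)‖ ^ 2 ≤ (a + b) * (‖y‖ ^ 2 + ‖z‖ ^ 2) := by
  have h := norm_sub_le (y * (√a : ℂ)) (z * (√b : ℂ))
  simp only [norm_mul, Complex.norm_real, Real.norm_of_nonneg (Real.sqrt_nonneg _)] at h
  have h2 := pow_le_pow_left₀ (norm_nonneg _) h 2
  have e1 := Real.sq_sqrt ha
  have e2 := Real.sq_sqrt hb
  have := sq_nonneg (‖y‖ * √b - ‖z‖ * √a)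
  nlinarith

lemma qfi_core {n J : Type*} [Fintype n] [Fintype J] [DecidableEq n] [DecidableEq J]
    (lam : n → ℝ) (hpos : ∀ k, 0 < lam k) (A : Matrix n n ℂ) (hA : A.IsHermitian)
    (B : Matrix n J ℂ) (hB : B * Bᴴ = diagonal fun k => (lam k : ℂ)) (a : J → ℝ) :
    ∑ k, ∑ l, (lam k - lam l) ^ 2 / (2 * (lam k + lam l)) * ‖A k l‖ ^ 2
      ≤ fro (A * B - B * diagonal fun j => (a j : ℂ)) := by
  set D : Matrix J J ℂ := diagonal fun j => (a j : ℂ) with hD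
  have hDh : Dᴴ = D := by
    rw [hD, diagonal_conjTranspose]; congr 1; ext j; simp
  set C := A * B - B * D with hC
  set S : Matrix n n ℂ := diagonal fun k => ((√(lam k))⁻¹ : ℂ) with hS
  have hSh : Sᴴ = S := by
    rw [hS, diagonal_conjTranspose]; congr 1; ext j; simp
  have hsq : ∀ k, (√(lam k) : ℂ) ≠ 0 := fun k => by
    exact_mod_cast (Real.sqrt_pos.2 (hpos k)).ne'
  have hsq2 : ∀ k, (√(lam k) : ℂ) * (√(lam k) : ℂ) = lam k := fun k => by
    exact_mod_cast Real.mul_self_sqrt (hpos k).le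
  have hP : (S * B) * (S * B)ᴴ = 1 := by
    rw [conjTranspose_mul, hSh]
    calc _ = S * (B * Bᴴ) * S := by simp only [Matrix.mul_assoc]
      _ = 1 := by
        rw [hB, hS, diagonal_mul_diagonal, diagonal_mul_diagonal, ← diagonal_one]
        congr 1; ext k
        rw [← hsq2 k]
        field_simp [hsq k]
  have hle := fro_coisometry C (S * B) hP
  set Y := C * (S * B)ᴴ with hY
  have hYC : ∀ k l, (C * Bᴴ) k l = Y k l * (√(lam l) : ℂ) := by
    intro k l
    rw [hY, conjTranspose_mul, hSh, ← Matrix.mul_assoc, hS, mul_diagonal, mul_assoc,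
      inv_mul_cancel₀ (hsq l), mul_one]
  have hcomm : C * Bᴴ - (C * Bᴴ)ᴴ = A * (diagonal fun k => (lam k : ℂ))
      - (diagonal fun k => (lam k : ℂ)) * A := by
    rw [← hB, hC]
    simp only [conjTranspose_mul, conjTranspose_sub, conjTranspose_conjTranspose, hA.eq, hDh,
      Matrix.sub_mul, Matrix.mul_sub, Matrix.mul_assoc]
    abel
  have hent : ∀ k l, A k l * ((lam l - lam k : ℝ) : ℂ)
      = Y k l * (√(lam l) : ℂ) - star (Y l k) * (√(lam k) : ℂ) := by
    intro k l
    have := congrFun (congrFun hcomm k) l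
    rw [Matrix.sub_apply, Matrix.sub_apply, conjTranspose_apply, hYC, hYC, mul_diagonal, diagonal_mul] at this
    rw [star_mul'] at this
    have e : star (√(lam k) : ℂ) = (√(lam k) : ℂ) := by simp
    rw [e] at this
    rw [this]; push_cast; ring
  have hterm : ∀ k l, (lam k - lam l) ^ 2 / (2 * (lam k + lam l)) * ‖A k l‖ ^ 2
      ≤ (‖Y k l‖ ^ 2 + ‖Y l k‖ ^ 2) / 2 := by
    intro k l
    have h := two_term (lam l) (lam k) (hpos l).le (hpos k).le (Y k l) (star (Y l k))
    rw [← hent, norm_mul, Complex.norm_real, norm_star, mul_pow, Real.norm_eq_abs, sq_abs] at h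
    have hk := hpos k
    have hl := hpos l
    rw [div_mul_eq_mul_div, div_le_div_iff₀ (by positivity) (by norm_num)]
    nlinarith
  calc _ ≤ ∑ k, ∑ l, (‖Y k l‖ ^ 2 + ‖Y l k‖ ^ 2) / 2 :=
        Finset.sum_le_sum fun k _ => Finset.sum_le_sum fun l _ => hterm k l
    _ = fro Y := by
        simp only [add_div, Finset.sum_add_distrib]
        rw [Finset.sum_comm (f := fun k l => ‖Y l k‖ ^ 2 / 2)]
        simp only [← Finset.sum_div, fro]
        ring
    _ ≤ _ := hle

lemma qfi_le {n J : Type*} [Fintype n] [Fintype J] [DecidableEq n] [DecidableEq J]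
    (lam : n → ℝ) (v : n → n → ℂ) (hpos : ∀ k, 0 < lam k)
    (hortho : ∀ k l, star (v k) ⬝ᵥ v l = if k = l then 1 else 0)
    (A : Matrix n n ℂ) (hA : A.IsHermitian) (u : J → n → ℂ)
    (hu : ∑ k, lam k • vecMulVec (v k) (star (v k)) = ∑ j, vecMulVec (u j) (star (u j)))
    (a : J → ℝ) :
    qfi lam v A ≤ ∑ j, nsq (A *ᵥ u j - (a j : ℂ) • u j) := by
  set V : Matrix n n ℂ := of fun x k => v k x with hV
  set U : Matrix n J ℂ := of fun x j => u j x with hU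
  have hVV : Vᴴ * V = 1 := by
    ext k l
    rw [mul_apply, one_apply, ← hortho k l]
    rfl
  have hVV' : V * Vᴴ = 1 := mul_eq_one_comm.1 hVV
  have hUU : U * Uᴴ = V * (diagonal fun k => (lam k : ℂ)) * Vᴴ := by
    ext x y
    have := congrFun (congrFun hu x) y
    simp only [Matrix.sum_apply, Matrix.smul_apply, vecMulVec_apply, Pi.star_apply] at this
    rw [mul_apply, mul_apply]
    simp only [mul_diagonal, conjTranspose_apply, hU, hV, of_apply]
    rw [← this]
    refine Finset.sum_congr rfl fun k _ => ?_
    rw [Complex.real_smul]; ring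
  have hB : (Vᴴ * U) * (Vᴴ * U)ᴴ = diagonal fun k => (lam k : ℂ) := by
    rw [conjTranspose_mul, conjTranspose_conjTranspose]
    calc _ = Vᴴ * (U * Uᴴ) * V := by simp only [Matrix.mul_assoc]
      _ = (Vᴴ * V) * (diagonal fun k => (lam k : ℂ)) * (Vᴴ * V) := by
        rw [hUU]; simp only [Matrix.mul_assoc]
      _ = _ := by rw [hVV, Matrix.mul_one, Matrix.one_mul]
  have hA' : (Vᴴ * A * V).IsHermitian := isHermitian_conjTranspose_mul_mul V hA
  have h := qfi_core lam hpos _ hA' (Vᴴ * U) hB a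
  have e1 : Vᴴ * A * V * (Vᴴ * U) - Vᴴ * U * (diagonal fun j => (a j : ℂ))
      = Vᴴ * (A * U - U * (diagonal fun j => (a j : ℂ))) := by
    rw [Matrix.mul_sub]
    congr 1
    · calc _ = Vᴴ * A * (V * Vᴴ) * U := by simp only [Matrix.mul_assoc]
        _ = _ := by rw [hVV', Matrix.mul_one, Matrix.mul_assoc]
    · rw [Matrix.mul_assoc]
  rw [e1, fro_unitary V hVV'] at h
  have e2 : fro (A * U - U * (diagonal fun j => (a j : ℂ)))
      = ∑ j, nsq (A *ᵥ u j - (a j : ℂ) • u j) := by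
    unfold fro nsq
    rw [Finset.sum_comm]
    refine Finset.sum_congr rfl fun j _ => Finset.sum_congr rfl fun x _ => ?_
    rw [Matrix.sub_apply, mul_diagonal, mul_apply, Pi.sub_apply, Pi.smul_apply, smul_eq_mul, mul_comm (U x j)]
    rfl
  rw [e2] at h
  refine le_trans (le_of_eq ?_) h
  unfold qfi
  refine Finset.sum_congr rfl fun k _ => Finset.sum_congr rfl fun l _ => ?_
  congr 3
  rw [Matrix.mul_assoc, mul_apply]
  rfl

lemma loo_complete {d : ℕ} (G : Fin (d ^ 2) → Matrix (Fin d) (Fin d) ℂ)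
    (hG : ∀ μ, (G μ).IsHermitian)
    (horth : ∀ μ ν, (G μ * G ν).trace = if μ = ν then 1 else 0) (a b c e : Fin d) :
    ∑ μ, star (G μ a b) * G μ c e = if a = c ∧ b = e then 1 else 0 := by
  set M : Matrix (Fin (d ^ 2)) (Fin d × Fin d) ℂ := of fun μ x => G μ x.1 x.2 with hM
  have h1 : M * Mᴴ = 1 := by
    ext μ ν
    rw [mul_apply, one_apply, ← horth μ ν, Fintype.sum_prod_type]
    simp only [trace, diag, mul_apply]
    refine Finset.sum_congr rfl fun i _ => Finset.sum_congr rfl fun j _ => ?_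
    rw [conjTranspose_apply, hM, of_apply, of_apply, (hG ν).apply]
  have h2 : Mᴴ * M = 1 :=
    (mul_eq_one_comm_of_card_eq _ _ _ (by simp [pow_two])).1 h1
  have := congrFun (congrFun h2 (a, b)) (c, e)
  rw [mul_apply, one_apply] at this
  simp only [Prod.mk.injEq] at this
  rw [← this]
  rfl

open ComplexOrder in
lemma loo_local {d : ℕ} (G : Fin (d ^ 2) → Matrix (Fin d) (Fin d) ℂ)
    (hG : ∀ μ, (G μ).IsHermitian)
    (horth : ∀ μ ν, (G μ * G ν).trace = if μ = ν then 1 else 0) (ψ : Fin d → ℂ) :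
    ∃ α : Fin (d ^ 2) → ℝ, (∀ μ, star ψ ⬝ᵥ (G μ *ᵥ ψ - (α μ : ℂ) • ψ) = 0) ∧
      ∑ μ, nsq (G μ *ᵥ ψ - (α μ : ℂ) • ψ) = ((d : ℝ) - 1) * nsq ψ := by
  by_cases h0 : nsq ψ = 0
  · have hψ : ψ = 0 := by
      have : star ψ ⬝ᵥ ψ = 0 := by rw [← nsq_eq, h0]; simp
      exact dotProduct_star_self_eq_zero.1 (by first | exact this | rwa [dotProduct_comm])
    subst hψ
    exact ⟨0, by simp, by simp [nsq]⟩
  set N := nsq ψ with hN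
  have hNc : (N : ℂ) ≠ 0 := by exact_mod_cast h0
  have hNN : star ψ ⬝ᵥ ψ = (N : ℂ) := (nsq_eq ψ).symm
  set e : Fin (d ^ 2) → ℂ := fun μ => star ψ ⬝ᵥ (G μ *ᵥ ψ) with he
  have hstar : ∀ μ, star (G μ *ᵥ ψ) ⬝ᵥ ψ = e μ := by
    intro μ
    rw [star_mulVec, (hG μ).eq, ← dotProduct_mulVec]
  have hreal : ∀ μ, star (e μ) = e μ := by
    intro μ
    conv_rhs => rw [← hstar μ]
    rw [he]
    simp only
    rw [star_dotProduct, star_star]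
  have hre : ∀ μ, ((e μ).re : ℂ) = e μ := fun μ => Complex.conj_eq_iff_re.1 (hreal μ)
  have hsum1 : ∑ μ, star (G μ *ᵥ ψ) ⬝ᵥ (G μ *ᵥ ψ) = (d : ℂ) * N := by
    have : ∀ μ, star (G μ *ᵥ ψ) ⬝ᵥ (G μ *ᵥ ψ)
        = ∑ a, ∑ b, ∑ c, star (ψ b) * ψ c * (star (G μ a b) * G μ a c) := by
      intro μ
      simp only [dotProduct, mulVec, Pi.star_apply, star_sum, star_mul', Finset.sum_mul_sum]
      refine Finset.sum_congr rfl fun a _ => Finset.sum_congr rfl fun b _ =>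
        Finset.sum_congr rfl fun c _ => ?_
      ring
    rw [Finset.sum_congr rfl fun μ _ => this μ, Finset.sum_comm]
    have h2 : ∀ a : Fin d, ∑ μ, ∑ b, ∑ c, star (ψ b) * ψ c * (star (G μ a b) * G μ a c) = N := by
      intro a
      rw [Finset.sum_comm]
      rw [← hNN, dotProduct]
      refine Finset.sum_congr rfl fun b _ => ?_
      rw [Finset.sum_comm]
      simp only [← Finset.mul_sum, loo_complete G hG horth]
      simp
    rw [Finset.sum_congr rfl fun a _ => h2 a]
    simp
  have hsum2 : ∑ μ, e μ * e μ = (N : ℂ) * N := by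
    set w : Fin d × Fin d → ℂ := fun x => star (ψ x.1) * ψ x.2 with hw
    have hex : ∀ μ, e μ = ∑ x, w x * G μ x.1 x.2 := by
      intro μ
      simp only [he, dotProduct, mulVec, Pi.star_apply, Finset.mul_sum, Fintype.sum_prod_type, hw]
      refine Finset.sum_congr rfl fun a _ => Finset.sum_congr rfl fun b _ => ?_
      ring
    have hee : ∀ μ, e μ * e μ
        = ∑ x, ∑ y, (star (w x) * w y) * (star (G μ x.1 x.2) * G μ y.1 y.2) := by
      intro μ
      nth_rewrite 1 [← hreal μ]
      rw [hex, star_sum, Finset.sum_mul_sum]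
      refine Finset.sum_congr rfl fun a _ => Finset.sum_congr rfl fun b _ => ?_
      rw [star_mul']
      ring
    simp only [hee]
    rw [Finset.sum_comm]
    have h3 : ∀ x, ∑ μ, ∑ y, (star (w x) * w y) * (star (G μ x.1 x.2) * G μ y.1 y.2)
        = star (w x) * w x := by
      intro x
      rw [Finset.sum_comm]
      simp only [← Finset.mul_sum, loo_complete G hG horth, ← Prod.ext_iff]
      simp
    simp only [h3]
    rw [← hNN]
    simp only [dotProduct, Fintype.sum_prod_type, Finset.sum_mul_sum, hw, star_mul', star_star,
      Pi.star_apply]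
    refine Finset.sum_congr rfl fun a _ => Finset.sum_congr rfl fun b _ => ?_
    ring
  have hperp : ∀ μ, star ψ ⬝ᵥ (G μ *ᵥ ψ - (((e μ).re / N : ℝ) : ℂ) • ψ) = 0 := by
    intro μ
    rw [dotProduct_sub, dotProduct_smul, hNN, smul_eq_mul]
    push_cast
    rw [hre, div_mul_cancel₀ _ hNc]
    exact sub_self _
  refine ⟨fun μ => (e μ).re / N, hperp, ?_⟩
  have hterm : ∀ μ, (nsq (G μ *ᵥ ψ - (((e μ).re / N : ℝ) : ℂ) • ψ) : ℂ)
      = star (G μ *ᵥ ψ) ⬝ᵥ (G μ *ᵥ ψ) - e μ * e μ / N := by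
    intro μ
    rw [nsq_eq, star_sub, sub_dotProduct, star_smul, smul_dotProduct, hperp, smul_zero, sub_zero,
      dotProduct_sub, dotProduct_smul, hstar, smul_eq_mul]
    push_cast
    rw [hre]
    ring
  have : ((∑ μ, nsq (G μ *ᵥ ψ - (((e μ).re / N : ℝ) : ℂ) • ψ) : ℝ) : ℂ)
      = (((d : ℝ) - 1) * N : ℝ) := by
    rw [Complex.ofReal_sum, Finset.sum_congr rfl fun μ _ => hterm μ]
    push_cast
    rw [Finset.sum_sub_distrib, hsum1, ← Finset.sum_div, hsum2]
    field_simp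
  exact_mod_cast this

/-- product vector -/
def tens {m n : Type*} (x : m → ℂ) (y : n → ℂ) : m × n → ℂ := fun i => x i.1 * y i.2

lemma tens_dot {m n : Type*} [Fintype m] [Fintype n] (x x' : m → ℂ) (y y' : n → ℂ) :
    star (tens x y) ⬝ᵥ tens x' y' = (star x ⬝ᵥ x') * (star y ⬝ᵥ y') := by
  simp only [dotProduct, Fintype.sum_prod_type, Finset.sum_mul_sum, tens, Pi.star_apply, star_mul']
  refine Finset.sum_congr rfl fun a _ => Finset.sum_congr rfl fun b _ => ?_
  ring

lemma kron_tens {m n : Type*} [Fintype m] [Fintype n] (A : Matrix m m ℂ) (B : Matrix n n ℂ)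
    (x : m → ℂ) (y : n → ℂ) : (A ⊗ₖ B) *ᵥ tens x y = tens (A *ᵥ x) (B *ᵥ y) := by
  ext ⟨i, j⟩
  simp only [mulVec, dotProduct, Fintype.sum_prod_type, tens, kroneckerMap_apply,
    Finset.sum_mul_sum]
  refine Finset.sum_congr rfl fun a _ => Finset.sum_congr rfl fun b _ => ?_
  ring

lemma nsq_smul {n : Type*} [Fintype n] (s : ℝ) (x : n → ℂ) :
    nsq ((s : ℂ) • x) = s ^ 2 * nsq x := by
  simp [nsq, mul_pow, Finset.mul_sum]

lemma prod_var {m n : Type*} [Fintype m] [Fintype n] [DecidableEq m] [DecidableEq n]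
    (A : Matrix m m ℂ) (B : Matrix n n ℂ) (x : m → ℂ) (y : n → ℂ) (s α β : ℝ)
    (hx : star x ⬝ᵥ (A *ᵥ x - (α : ℂ) • x) = 0) (hy : star y ⬝ᵥ (B *ᵥ y - (β : ℂ) • y) = 0) :
    nsq ((A ⊗ₖ (1 : Matrix n n ℂ) + (1 : Matrix m m ℂ) ⊗ₖ B) *ᵥ ((s : ℂ) • tens x y)
        - ((α + β : ℝ) : ℂ) • ((s : ℂ) • tens x y))
      = s ^ 2 * (nsq (A *ᵥ x - (α : ℂ) • x) * nsq y + nsq x * nsq (B *ᵥ y - (β : ℂ) • y)) := by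
  set X := A *ᵥ x - (α : ℂ) • x with hX
  set Y := B *ᵥ y - (β : ℂ) • y with hY
  have h1 : (A ⊗ₖ (1 : Matrix n n ℂ) + (1 : Matrix m m ℂ) ⊗ₖ B) *ᵥ ((s : ℂ) • tens x y)
        - ((α + β : ℝ) : ℂ) • ((s : ℂ) • tens x y) = (s : ℂ) • (tens X y + tens x Y) := by
    rw [mulVec_smul, add_mulVec, kron_tens, kron_tens, one_mulVec, one_mulVec]
    ext ⟨i, j⟩
    simp only [hX, hY, tens, Pi.add_apply, Pi.sub_apply, Pi.smul_apply, smul_eq_mul]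
    push_cast
    ring
  rw [h1, nsq_smul]
  congr 1
  have hx' : star X ⬝ᵥ x = 0 := by
    rw [star_dotProduct, hx, star_zero]
  have : (nsq (tens X y + tens x Y) : ℂ) = ((nsq X * nsq y + nsq x * nsq Y : ℝ) : ℂ) := by
    push_cast
    rw [nsq_eq, star_add, add_dotProduct, dotProduct_add, dotProduct_add, tens_dot, tens_dot,
      tens_dot, tens_dot, hx, hx', nsq_eq, nsq_eq, nsq_eq, nsq_eq]
    ring
  exact_mod_cast this

open ComplexOrder MatrixOrder Matrix.Norms.L2Operator in
lemma psd_decomp {d : ℕ} (ρ : Matrix (Fin d) (Fin d) ℂ) (h : ρ.PosSemidef) (htr : ρ.trace = 1) :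
    ∃ ψ : Fin d → Fin d → ℂ, (∀ a b, ρ a b = ∑ i, ψ i a * star (ψ i b)) ∧ ∑ i, nsq (ψ i) = 1 := by
  obtain ⟨R, hR⟩ := CStarAlgebra.nonneg_iff_eq_star_mul_self.mp h.nonneg
  have h1 : ∀ a b, ρ a b = ∑ i, star (R i a) * star (star (R i b)) := by
    intro a b
    rw [hR, star_eq_conjTranspose, mul_apply]
    simp [conjTranspose_apply]
  refine ⟨fun i a => star (R i a), h1, ?_⟩
  have : ((∑ i, nsq (fun a => star (R i a)) : ℝ) : ℂ) = ((1 : ℝ) : ℂ) := by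
    push_cast
    rw [← htr]
    simp only [nsq_eq, trace, diag, h1, dotProduct]
    rw [Finset.sum_comm]
    refine Finset.sum_congr rfl fun a _ => Finset.sum_congr rfl fun b _ => ?_
    rw [mul_comm]; rfl
  exact_mod_cast this

open ComplexOrder in
theorem total_qfi_loo_separable_bound {d K : ℕ}
    (p : Fin K → ℝ) (hp : ∀ k, 0 ≤ p k) (hp1 : ∑ k, p k = 1)
    (ρA ρB : Fin K → Matrix (Fin d) (Fin d) ℂ)
    (hρA : ∀ k, (ρA k).PosSemidef) (htrA : ∀ k, (ρA k).trace = 1)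
    (hρB : ∀ k, (ρB k).PosSemidef) (htrB : ∀ k, (ρB k).trace = 1)
    (GA GB : Fin (d ^ 2) → Matrix (Fin d) (Fin d) ℂ)
    (hGA : ∀ μ, (GA μ).IsHermitian) (hGB : ∀ μ, (GB μ).IsHermitian)
    (horthA : ∀ μ ν, (GA μ * GA ν).trace = if μ = ν then 1 else 0)
    (horthB : ∀ μ ν, (GB μ * GB ν).trace = if μ = ν then 1 else 0)
    (lam : Fin d × Fin d → ℝ) (v : Fin d × Fin d → Fin d × Fin d → ℂ)
    (hpos : ∀ k, 0 < lam k)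
    (hortho : ∀ k l, star (v k) ⬝ᵥ v l = if k = l then 1 else 0)
    (hsep : ∑ k, lam k • vecMulVec (v k) (star (v k)) = ∑ k, p k • (ρA k ⊗ₖ ρB k)) :
    ∑ μ, qfi lam v (GA μ ⊗ₖ (1 : Matrix (Fin d) (Fin d) ℂ)
      + (1 : Matrix (Fin d) (Fin d) ℂ) ⊗ₖ GB μ) ≤ 2 * ((d : ℝ) - 1) := by
  
  choose ψ hψ hψ1 using fun k => psd_decomp (ρA k) (hρA k) (htrA k)
  choose φ hφ hφ1 using fun k => psd_decomp (ρB k) (hρB k) (htrB k)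
  choose α hα hα1 using fun k i => loo_local GA hGA horthA (ψ k i)
  choose β hβ hβ1 using fun k i => loo_local GB hGB horthB (φ k i)
  set u : Fin K × Fin d × Fin d → Fin d × Fin d → ℂ :=
    fun j => ((√(p j.1) : ℝ) : ℂ) • tens (ψ j.1 j.2.1) (φ j.1 j.2.2) with hu
  have hdec : ∑ k, lam k • vecMulVec (v k) (star (v k)) = ∑ j, vecMulVec (u j) (star (u j)) := by
    rw [hsep]
    ext ⟨a, b⟩ ⟨a', b'⟩
    simp only [Matrix.sum_apply, Fintype.sum_prod_type]
    refine Finset.sum_congr rfl fun k _ => ?_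
    rw [Matrix.smul_apply, kroneckerMap_apply, hψ, hφ, Finset.sum_mul_sum, Finset.smul_sum]
    refine Finset.sum_congr rfl fun i _ => ?_
    rw [Finset.smul_sum]
    refine Finset.sum_congr rfl fun j _ => ?_
    have hs : ((√(p k) : ℝ) : ℂ) * ((√(p k) : ℝ) : ℂ) = p k := by
      exact_mod_cast Real.mul_self_sqrt (hp k)
    have hst : star ((√(p k) : ℝ) : ℂ) = ((√(p k) : ℝ) : ℂ) := by simp
    simp only [hu, vecMulVec_apply, Pi.star_apply, Pi.smul_apply, smul_eq_mul, star_mul', tens,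
      Complex.real_smul, hst]
    rw [← hs]
    ring
  have hherm : ∀ μ, (GA μ ⊗ₖ (1 : Matrix (Fin d) (Fin d) ℂ)
      + (1 : Matrix (Fin d) (Fin d) ℂ) ⊗ₖ GB μ).IsHermitian := by
    intro μ
    unfold Matrix.IsHermitian
    rw [conjTranspose_add, conjTranspose_kronecker, conjTranspose_kronecker, (hGA μ).eq,
      (hGB μ).eq, conjTranspose_one]
  calc _ ≤ ∑ μ, ∑ j : Fin K × Fin d × Fin d, (√(p j.1)) ^ 2 *
        (nsq (GA μ *ᵥ ψ j.1 j.2.1 - (α j.1 j.2.1 μ : ℂ) • ψ j.1 j.2.1) * nsq (φ j.1 j.2.2)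
        + nsq (ψ j.1 j.2.1) * nsq (GB μ *ᵥ φ j.1 j.2.2 - (β j.1 j.2.2 μ : ℂ) • φ j.1 j.2.2)) := by
        refine Finset.sum_le_sum fun μ _ => ?_
        refine (qfi_le lam v hpos hortho _ (hherm μ) u hdec
          (fun j => α j.1 j.2.1 μ + β j.1 j.2.2 μ)).trans (le_of_eq ?_)
        refine Finset.sum_congr rfl fun j _ => ?_
        exact prod_var _ _ _ _ _ _ _ (hα _ _ _) (hβ _ _ _)
    _ = ∑ j : Fin K × Fin d × Fin d,
        2 * ((d : ℝ) - 1) * (p j.1 * (nsq (ψ j.1 j.2.1) * nsq (φ j.1 j.2.2))) := by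
        rw [Finset.sum_comm]
        refine Finset.sum_congr rfl fun j _ => ?_
        rw [← Finset.mul_sum, Finset.sum_add_distrib, ← Finset.sum_mul, ← Finset.mul_sum, hα1, hβ1,
          Real.sq_sqrt (hp _)]
        ring
    _ = 2 * ((d : ℝ) - 1) := by
        rw [← Finset.mul_sum]
        simp only [Fintype.sum_prod_type, ← Finset.mul_sum, ← Finset.sum_mul, hψ1, hφ1, mul_one, hp1]
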